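/- arXiv:2603.17750 — 2 statements merged into one kernel-verified Lean document; each statement's English description precedes it below -/
import Mathlib

section
/- Let p0 be a probability density on ℝ^m and q(·|y0) strictly positive probability densities on ℝ^d, differentiable in y, with mixture density p(y) = ∫ p0(y0) q(y|y0) dy0, and let the pair (Y0, Y) have joint density p0(y0) q(y|y0). Then for every measurable ψ : ℝ^d → ℝ^d with E‖ψ(Y)‖² < ∞ and under the integrability assumption E‖∇_y log q(Y|Y0)‖² < ∞, the decomposition E‖∇_y log q(Y|Y0) − ψ(Y)‖² = E‖∇ log p(Y) − ψ(Y)‖² + C holds, where C = E‖∇_y log q(Y|Y0)‖² − E‖∇ log p(Y)‖² does not depend on ψ. -/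
open MeasureTheory

/-- The mixture (marginal) density `p(y) = ∫ p0(y0) q(y|y0) dy0`. -/
noncomputable def mixtureDensity {m d : ℕ}
    (p0 : EuclideanSpace ℝ (Fin m) → ℝ)
    (q : EuclideanSpace ℝ (Fin d) → EuclideanSpace ℝ (Fin m) → ℝ)
    (y : EuclideanSpace ℝ (Fin d)) : ℝ :=
  ∫ y0, p0 y0 * q y y0

/-!
Let `π` be the joint law of `(Y0, Y)`. The hypothesis on `∇ log p` says that
`∇ log p(Y) = E[∇_y log q(Y|Y0) | Y]`, and conditional expectation is the orthogonal projection
of `L²(π)` onto the functions of `Y`. Hence `∇_y log q(Y|Y0)` and `∇ log p(Y)` have the same inner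
product with `ψ(Y)`, and expanding both squares gives the decomposition.

The only delicate point is measurability: `q` is merely differentiable in `y`, and `p0 * q` is only
a.e. measurable in `y0` for each fixed `y`. Restricting `y0` to a conull set makes `p0 * q` a
Carathéodory function, whose `y`-gradient is a pointwise limit of measurable difference quotients.
-/

open Filter Topology
open scoped Gradient

section L2Projection

variable {Ω E : Type*} {m m₀ : MeasurableSpace Ω} {P : Measure Ω}
  [NormedAddCommGroup E] [InnerProductSpace ℝ E] {X Z : Ω → E}

lemma integrable_inner_of_memLp_two (hX : MemLp X 2 P) (hZ : MemLp Z 2 P) :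
    Integrable (fun ω => inner ℝ (X ω) (Z ω)) P :=
  (hX.norm.integrable_mul hZ.norm).mono' (hX.1.inner hZ.1)
    (ae_of_all _ fun _ => norm_inner_le_norm _ _)

lemma integral_norm_sub_sq (hX : MemLp X 2 P) (hZ : MemLp Z 2 P) :
    ∫ ω, ‖X ω - Z ω‖ ^ 2 ∂P
      = ∫ ω, ‖X ω‖ ^ 2 ∂P - 2 * ∫ ω, inner ℝ (X ω) (Z ω) ∂P + ∫ ω, ‖Z ω‖ ^ 2 ∂P := by
  have hX_sq := hX.integrable_norm_pow two_ne_zero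
  have hZ_sq := hZ.integrable_norm_pow two_ne_zero
  have h_inner := (integrable_inner_of_memLp_two hX hZ).const_mul 2
  simp only [norm_sub_sq_real]
  rw [integral_add (by exact hX_sq.sub h_inner) hZ_sq, integral_sub hX_sq h_inner,
    integral_const_mul]

variable [CompleteSpace E] [IsFiniteMeasure P]

lemma integral_inner_condExp_left (hm : m ≤ m₀) (hX : MemLp X 2 P) (hZ : MemLp Z 2 P)
    (hZm : AEStronglyMeasurable[m] Z P) :
    ∫ ω, inner ℝ (P[X | m] ω) (Z ω) ∂P = ∫ ω, inner ℝ (X ω) (Z ω) ∂P := by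
  have pull_out : P[fun ω => inner ℝ (X ω) (Z ω) | m] =ᵐ[P] fun ω => inner ℝ (P[X | m] ω) (Z ω) :=
    condExp_bilin_of_aestronglyMeasurable_right (innerSL ℝ) hZm
      (integrable_inner_of_memLp_two hX hZ) (hX.integrable one_le_two)
  rw [← integral_congr_ae pull_out, integral_condExp hm]

lemma integral_norm_sub_sq_eq_of_ae_eq_condExp {Y : Ω → E} (hm : m ≤ m₀) (hX : MemLp X 2 P)
    (hY : Y =ᵐ[P] P[X | m]) (hZ : MemLp Z 2 P) (hZm : AEStronglyMeasurable[m] Z P) :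
    ∫ ω, ‖X ω - Z ω‖ ^ 2 ∂P
      = ∫ ω, ‖Y ω - Z ω‖ ^ 2 ∂P + (∫ ω, ‖X ω‖ ^ 2 ∂P - ∫ ω, ‖Y ω‖ ^ 2 ∂P) := by
  have hY_L2 : MemLp Y 2 P := (hX.condExp one_le_two).ae_eq hY.symm
  have h_inner : ∫ ω, inner ℝ (Y ω) (Z ω) ∂P = ∫ ω, inner ℝ (X ω) (Z ω) ∂P := by
    rw [← integral_inner_condExp_left hm hX hZ hZm]
    exact integral_congr_ae (hY.mono fun ω hω => by simp only [hω])
  rw [integral_norm_sub_sq hX hZ, integral_norm_sub_sq hY_L2 hZ, h_inner]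
  ring

end L2Projection

section RealDensity

variable {Ω E : Type*} [MeasurableSpace Ω] {μ : Measure Ω}
  [NormedAddCommGroup E] [NormedSpace ℝ E] {w : Ω → ℝ}

lemma integral_withDensity_ofReal (hw : AEMeasurable w μ) (hw_nonneg : ∀ ω, 0 ≤ w ω)
    (f : Ω → E) :
    ∫ ω, f ω ∂μ.withDensity (fun ω => ENNReal.ofReal (w ω)) = ∫ ω, w ω • f ω ∂μ := by
  rw [integral_withDensity_eq_integral_toReal_smul₀ hw.ennreal_ofReal (by simp)]
  simp only [ENNReal.toReal_ofReal (hw_nonneg _)]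

lemma integrable_withDensity_ofReal_iff (hw : AEMeasurable w μ) (hw_nonneg : ∀ ω, 0 ≤ w ω)
    {f : Ω → E} :
    Integrable f (μ.withDensity fun ω => ENNReal.ofReal (w ω))
      ↔ Integrable (fun ω => w ω • f ω) μ := by
  rw [integrable_withDensity_iff_integrable_smul₀' hw.ennreal_ofReal (by simp)]
  simp only [ENNReal.toReal_ofReal (hw_nonneg _)]

lemma ae_withDensity_ofReal_of_forall_ne_zero (hw : AEMeasurable w μ) {r : Ω → Prop}
    (h : ∀ ω, w ω ≠ 0 → r ω) :
    ∀ᵐ ω ∂μ.withDensity (fun ω => ENNReal.ofReal (w ω)), r ω :=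
  (ae_withDensity_iff' hw.ennreal_ofReal).2 <| ae_of_all _ fun ω hω =>
    h ω fun hw_zero => hω (by rw [hw_zero, ENNReal.ofReal_zero])

end RealDensity

section CondExpSnd

variable {α β E : Type*} [MeasurableSpace α] [MeasurableSpace β]
  [NormedAddCommGroup E] [NormedSpace ℝ E]
  {μ : Measure α} {ν : Measure β} [SFinite μ] [SFinite ν]

lemma setIntegral_preimage_snd {f : α × β → E} (hf : Integrable f (μ.prod ν)) (t : Set β) :
    ∫ z in Prod.snd ⁻¹' t, f z ∂μ.prod ν = ∫ y in t, ∫ x, f (x, y) ∂μ ∂ν := by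
  have h_restrict : (μ.prod ν).restrict (Prod.snd ⁻¹' t) = μ.prod (ν.restrict t) := by
    rw [← Set.univ_prod, ← Measure.prod_restrict, Measure.restrict_univ]
  rw [h_restrict, integral_prod_symm]
  exact h_restrict ▸ hf.restrict

variable {w : α × β → ℝ} {S : α × β → E} {s : β → E}

lemma integrable_smul_comp_snd (hw_nonneg : ∀ z, 0 ≤ w z) (hw : Integrable w (μ.prod ν))
    (hwS : Integrable (fun z => w z • S z) (μ.prod ν)) (hs : StronglyMeasurable s)
    (h_avg : ∀ᵐ y ∂ν, (∫ x, w (x, y) ∂μ) • s y = ∫ x, w (x, y) • S (x, y) ∂μ) :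
    Integrable (fun z => w z • s z.2) (μ.prod ν) := by
  have h_meas : AEStronglyMeasurable (fun z => w z • s z.2) (μ.prod ν) :=
    hw.1.smul (hs.comp_measurable measurable_snd).aestronglyMeasurable
  refine (integrable_prod_iff' h_meas).2 ⟨?_, ?_⟩
  · filter_upwards [hw.prod_left_ae] with y hy using hy.smul_const _
  · refine hwS.norm.integral_prod_right.mono' h_meas.norm.prod_swap.integral_prod_right' ?_
    filter_upwards [h_avg] with y hy
    have h_eq : ∫ x, ‖w (x, y) • s y‖ ∂μ = ‖∫ x, w (x, y) • S (x, y) ∂μ‖ := by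
      rw [← hy, norm_smul, Real.norm_of_nonneg (integral_nonneg fun x => hw_nonneg _),
        ← integral_mul_const]
      simp only [norm_smul, Real.norm_of_nonneg (hw_nonneg _)]
    rw [Real.norm_of_nonneg (by positivity), h_eq]
    exact norm_integral_le_integral_norm _

lemma comp_snd_ae_eq_condExp_withDensity_prod [CompleteSpace E]
    (hw_nonneg : ∀ z, 0 ≤ w z) (hw : Integrable w (μ.prod ν))
    (hwS : Integrable (fun z => w z • S z) (μ.prod ν)) (hs : StronglyMeasurable s)
    (h_avg : ∀ᵐ y ∂ν, (∫ x, w (x, y) ∂μ) • s y = ∫ x, w (x, y) • S (x, y) ∂μ) :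
    (fun z => s z.2) =ᵐ[(μ.prod ν).withDensity fun z => ENNReal.ofReal (w z)]
      ((μ.prod ν).withDensity fun z => ENNReal.ofReal (w z))[S |
        MeasurableSpace.comap Prod.snd inferInstance] := by
  have := isFiniteMeasure_withDensity_ofReal hw.2
  have hw_meas := hw.aemeasurable
  have hws := integrable_smul_comp_snd hw_nonneg hw hwS hs h_avg
  refine ae_eq_condExp_of_forall_setIntegral_eq measurable_snd.comap_le
    ((integrable_withDensity_ofReal_iff hw_meas hw_nonneg).2 hwS)
    (fun _ _ _ => ((integrable_withDensity_ofReal_iff hw_meas hw_nonneg).2 hws).integrableOn) ?_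
    (hs.comp_measurable (comap_measurable Prod.snd)).aestronglyMeasurable
  rintro _ ⟨t, ht, rfl⟩ -
  rw [restrict_withDensity (measurable_snd ht),
    integral_withDensity_ofReal hw_meas.restrict hw_nonneg,
    integral_withDensity_ofReal hw_meas.restrict hw_nonneg,
    setIntegral_preimage_snd hws, setIntegral_preimage_snd hwS]
  refine integral_congr_ae (ae_restrict_of_ae ?_)
  filter_upwards [h_avg] with y hy
  rw [integral_smul_const, hy]

end CondExpSnd

section WeightedDecomposition

variable {α β E : Type*} [MeasurableSpace α] [MeasurableSpace β]
  [NormedAddCommGroup E] [InnerProductSpace ℝ E] [CompleteSpace E]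
  {μ : Measure α} {ν : Measure β} [SFinite μ] [SFinite ν]

theorem integral_mul_norm_sub_sq_eq_of_marginal_average
    {w : α × β → ℝ} {S : α × β → E} {s ψ : β → E}
    (hw_nonneg : ∀ z, 0 ≤ w z) (hw : Integrable w (μ.prod ν))
    (hS : AEStronglyMeasurable S ((μ.prod ν).withDensity fun z => ENNReal.ofReal (w z)))
    (hS_sq : Integrable (fun z => w z * ‖S z‖ ^ 2) (μ.prod ν)) (hs : StronglyMeasurable s)
    (h_avg : ∀ᵐ y ∂ν, (∫ x, w (x, y) ∂μ) • s y = ∫ x, w (x, y) • S (x, y) ∂μ)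
    (hψ : StronglyMeasurable ψ) (hψ_sq : Integrable (fun z => w z * ‖ψ z.2‖ ^ 2) (μ.prod ν)) :
    ∫ z, w z * ‖S z - ψ z.2‖ ^ 2 ∂μ.prod ν
      = ∫ z, w z * ‖s z.2 - ψ z.2‖ ^ 2 ∂μ.prod ν
        + (∫ z, w z * ‖S z‖ ^ 2 ∂μ.prod ν - ∫ z, w z * ‖s z.2‖ ^ 2 ∂μ.prod ν) := by
  have hw_meas := hw.aemeasurable
  have := isFiniteMeasure_withDensity_ofReal hw.2
  set π := (μ.prod ν).withDensity fun z => ENNReal.ofReal (w z)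
  have hS_L2 : MemLp S 2 π := (memLp_two_iff_integrable_sq_norm hS).2
    ((integrable_withDensity_ofReal_iff hw_meas hw_nonneg).2 hS_sq)
  have hψ_L2 : MemLp (fun z => ψ z.2) 2 π := (memLp_two_iff_integrable_sq_norm
    (hψ.comp_measurable measurable_snd).aestronglyMeasurable).2
    ((integrable_withDensity_ofReal_iff hw_meas hw_nonneg).2 hψ_sq)
  have hwS : Integrable (fun z => w z • S z) (μ.prod ν) :=
    (integrable_withDensity_ofReal_iff hw_meas hw_nonneg).1 (hS_L2.integrable one_le_two)
  have h_condExp := comp_snd_ae_eq_condExp_withDensity_prod hw_nonneg hw hwS hs h_avg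
  have h_projection := integral_norm_sub_sq_eq_of_ae_eq_condExp measurable_snd.comap_le hS_L2
    h_condExp hψ_L2 (hψ.comp_measurable (comap_measurable Prod.snd)).aestronglyMeasurable
  simpa only [π, integral_withDensity_ofReal hw_meas hw_nonneg, smul_eq_mul] using h_projection

end WeightedDecomposition

section Caratheodory

variable {α β F : Type*} [MeasurableSpace α] [TopologicalSpace β] [TopologicalSpace F]
  [TopologicalSpace.PseudoMetrizableSpace F]

lemma stronglyMeasurable_apply_of_dense [FrechetUrysohnSpace β] {v : α → β → F}
    (hv : ∀ x, Continuous (v x)) {D : Set β} (hD : Dense D)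
    (hvD : ∀ y ∈ D, StronglyMeasurable fun x => v x y) (y : β) :
    StronglyMeasurable fun x => v x y := by
  obtain ⟨u, hu_mem, hu_lim⟩ := mem_closure_iff_seq_limit.1 (hD y)
  exact stronglyMeasurable_of_tendsto atTop (fun n => hvD (u n) (hu_mem n))
    (tendsto_pi_nhds.2 fun x => ((hv x).tendsto y).comp hu_lim)

variable [TopologicalSpace.MetrizableSpace β] [SecondCountableTopology β]
  [MeasurableSpace β] [OpensMeasurableSpace β] {μ : Measure α}

-- By continuity in `y`, only the exceptional null sets of countably many `y` matter.
lemma exists_conull_stronglyMeasurable_indicator [Zero F] {w : α → β → F}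
    (hw_cont : ∀ x, Continuous (w x)) (hw_meas : ∀ y, AEStronglyMeasurable (fun x => w x y) μ) :
    ∃ t : Set α, (∀ᵐ x ∂μ, x ∈ t) ∧
      StronglyMeasurable fun z : α × β => t.indicator w z.1 z.2 := by
  obtain ⟨D, hD_count, hD_dense⟩ := TopologicalSpace.exists_countable_dense β
  have h_ae : ∀ᵐ x ∂μ, ∀ y ∈ D, w x y = (hw_meas y).mk _ x :=
    (ae_ball_iff hD_count).2 fun y _ => (hw_meas y).ae_eq_mk
  obtain ⟨t, ht_ae, ht_meas, ht_eq⟩ := h_ae.exists_measurable_mem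
  have h_cont (x : α) : Continuous (t.indicator w x) := by
    by_cases hx : x ∈ t
    · simpa only [Set.indicator_of_mem hx] using hw_cont x
    · simpa only [Set.indicator_of_notMem hx] using continuous_zero
  have h_dense : ∀ y ∈ D, StronglyMeasurable fun x => t.indicator w x y := by
    intro y hy
    convert (hw_meas y).stronglyMeasurable_mk.indicator ht_meas using 1
    ext x
    by_cases hx : x ∈ t
    · simp only [Set.indicator_of_mem hx, ht_eq x hx y hy]
    · simp only [Set.indicator_of_notMem hx, Pi.zero_apply]
  exact ⟨t, ht_ae, (stronglyMeasurable_uncurry_of_continuous_of_stronglyMeasurable h_cont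
    (stronglyMeasurable_apply_of_dense h_cont hD_dense h_dense)).comp_measurable measurable_swap⟩

lemma aestronglyMeasurable_uncurry_of_continuous [Zero F] {ν : Measure β}
    {w : α → β → F} (hw_cont : ∀ x, Continuous (w x))
    (hw_meas : ∀ y, AEStronglyMeasurable (fun x => w x y) μ) :
    AEStronglyMeasurable (fun z : α × β => w z.1 z.2) (μ.prod ν) := by
  obtain ⟨t, ht, ht_meas⟩ := exists_conull_stronglyMeasurable_indicator hw_cont hw_meas
  refine ⟨_, ht_meas, ?_⟩
  filter_upwards [Measure.quasiMeasurePreserving_fst.ae ht] with z hz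
  rw [Set.indicator_of_mem hz]

end Caratheodory

section GradientMeasurability

variable {α E : Type*} [MeasurableSpace α] [NormedAddCommGroup E] [MeasurableSpace E]
  [BorelSpace E]

lemma stronglyMeasurable_fderiv_snd_apply {F : Type*} [NormedSpace ℝ E]
    [NormedAddCommGroup F] [NormedSpace ℝ F]
    {v : α → E → F} (hv_diff : ∀ x, Differentiable ℝ (v x))
    (hv : StronglyMeasurable fun z : α × E => v z.1 z.2) (e : E) :
    StronglyMeasurable fun z : α × E => fderiv ℝ (v z.1) z.2 e := by
  have h_shift (h : E) : StronglyMeasurable fun z : α × E => v z.1 (z.2 + h) :=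
    hv.comp_measurable (measurable_fst.prodMk (measurable_snd.add_const h))
  exact stronglyMeasurable_of_tendsto atTop
    (fun c : ℝ => ((h_shift (c⁻¹ • e)).sub hv).const_smul c)
    (tendsto_pi_nhds.2 fun z => (hv_diff z.1 z.2).hasFDerivAt.lim_real e)

variable [InnerProductSpace ℝ E] [FiniteDimensional ℝ E]

lemma stronglyMeasurable_gradient_snd {v : α → E → ℝ} (hv_diff : ∀ x, Differentiable ℝ (v x))
    (hv : StronglyMeasurable fun z : α × E => v z.1 z.2) :
    StronglyMeasurable fun z : α × E => ∇ (v z.1) z.2 := by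
  let b := stdOrthonormalBasis ℝ E
  have h_coord (z : α × E) : ∇ (v z.1) z.2 = ∑ i, fderiv ℝ (v z.1) z.2 (b i) • b i := by
    simp only [← inner_gradient_left, real_inner_comm (b _), b.sum_repr']
  simp only [h_coord]
  exact Finset.stronglyMeasurable_fun_sum _ fun i _ =>
    (stronglyMeasurable_fderiv_snd_apply hv_diff hv (b i)).smul_const (b i)

lemma aestronglyMeasurable_gradient_snd {μ : Measure α} {ν : Measure E}
    {w : α → E → ℝ} (hw_diff : ∀ x, Differentiable ℝ (w x))
    (hw_meas : ∀ y, AEStronglyMeasurable (fun x => w x y) μ) :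
    AEStronglyMeasurable (fun z : α × E => ∇ (w z.1) z.2) (μ.prod ν) := by
  obtain ⟨t, ht, ht_meas⟩ :=
    exists_conull_stronglyMeasurable_indicator (fun x => (hw_diff x).continuous) hw_meas
  have h_diff (x : α) : Differentiable ℝ (t.indicator w x) := by
    by_cases hx : x ∈ t
    · simpa only [Set.indicator_of_mem hx] using hw_diff x
    · simpa only [Set.indicator_of_notMem hx] using differentiable_zero
  refine ⟨_, stronglyMeasurable_gradient_snd h_diff ht_meas, ?_⟩
  filter_upwards [Measure.quasiMeasurePreserving_fst.ae ht] with z hz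
  rw [Set.indicator_of_mem hz]

lemma stronglyMeasurable_gradient (f : E → ℝ) : StronglyMeasurable (∇ f) :=
  ((InnerProductSpace.toDual ℝ E).symm.continuous.measurable.comp
    (measurable_fderiv ℝ f)).stronglyMeasurable

end GradientMeasurability

lemma gradient_log_eq_inv_smul_gradient_const_mul {E : Type*} [NormedAddCommGroup E]
    [InnerProductSpace ℝ E] [CompleteSpace E] {f : E → ℝ} {c : ℝ} {y : E}
    (hf : DifferentiableAt ℝ f y) (hcf : c * f y ≠ 0) :
    ∇ (fun z => Real.log (f z)) y = (c * f y)⁻¹ • ∇ (fun z => c * f z) y := by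
  have hc : c ≠ 0 := left_ne_zero_of_mul hcf
  have hfy : f y ≠ 0 := right_ne_zero_of_mul hcf
  rw [gradient, gradient, fderiv.log hf hfy, fderiv_const_mul hf, map_smul, map_smul, smul_smul]
  congr 1
  field_simp

section DenoisingScoreMatching

variable {α E : Type*} [MeasurableSpace α] {μ : Measure α} {p0 : α → ℝ}

lemma integrable_joint_density {β : Type*} [MeasurableSpace β] {ν : Measure β} [SFinite ν]
    {q : β → α → ℝ} (hp0_int : Integrable p0 μ) (hq_nonneg : ∀ y x, 0 ≤ q y x)
    (hq_prob : ∀ x, ∫ y, q y x ∂ν = 1)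
    (h_meas : AEStronglyMeasurable (fun z : α × β => p0 z.1 * q z.2 z.1) (μ.prod ν)) :
    Integrable (fun z : α × β => p0 z.1 * q z.2 z.1) (μ.prod ν) := by
  have hq_int (x : α) : Integrable (fun y => q y x) ν :=
    .of_integral_ne_zero (by rw [hq_prob x]; exact one_ne_zero)
  refine (integrable_prod_iff h_meas).2 ⟨ae_of_all _ fun x => (hq_int x).const_mul (p0 x), ?_⟩
  simpa only [norm_mul, Real.norm_of_nonneg (hq_nonneg _ _), integral_const_mul, hq_prob, mul_one]
    using hp0_int.norm

-- If the total weight vanishes then so does the weight almost everywhere, hence both sides.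
lemma integral_smul_eq_integral_smul_of_eq_average [NormedAddCommGroup E] [NormedSpace ℝ E]
    {w : α → ℝ} {f : α → E} {a : E} (hw_nonneg : ∀ x, 0 ≤ w x) (hw : Integrable w μ)
    (ha : ∫ x, w x ∂μ ≠ 0 → a = (∫ x, w x ∂μ)⁻¹ • ∫ x, w x • f x ∂μ) :
    (∫ x, w x ∂μ) • a = ∫ x, w x • f x ∂μ := by
  by_cases h_zero : ∫ x, w x ∂μ = 0
  · have hw_ae : w =ᵐ[μ] 0 := (integral_eq_zero_iff_of_nonneg hw_nonneg hw).1 h_zero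
    rw [h_zero, zero_smul, integral_eq_zero_of_ae]
    filter_upwards [hw_ae] with x hx
    rw [hx, Pi.zero_apply, zero_smul, Pi.zero_apply]
  · rw [ha h_zero, smul_inv_smul₀ h_zero]

variable [NormedAddCommGroup E] [InnerProductSpace ℝ E] [FiniteDimensional ℝ E]
  [MeasurableSpace E] [BorelSpace E] {ν : Measure E} {q : E → α → ℝ}

lemma aestronglyMeasurable_conditional_score (hq_diff : ∀ x, Differentiable ℝ fun y => q y x)
    (h_meas : ∀ y, AEStronglyMeasurable (fun x => p0 x * q y x) μ) :
    AEStronglyMeasurable (fun z : α × E => ∇ (fun y => Real.log (q y z.1)) z.2)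
      ((μ.prod ν).withDensity fun z => ENNReal.ofReal (p0 z.1 * q z.2 z.1)) := by
  have hw_diff (x : α) : Differentiable ℝ fun y => p0 x * q y x := (hq_diff x).const_mul _
  have hw : AEStronglyMeasurable (fun z : α × E => p0 z.1 * q z.2 z.1) (μ.prod ν) :=
    aestronglyMeasurable_uncurry_of_continuous (fun x => (hw_diff x).continuous) h_meas
  have h_quot : AEStronglyMeasurable
      (fun z : α × E => (p0 z.1 * q z.2 z.1)⁻¹ • ∇ (fun y => p0 z.1 * q y z.1) z.2) (μ.prod ν) :=
    hw.aemeasurable.inv.aestronglyMeasurable.smul (aestronglyMeasurable_gradient_snd hw_diff h_meas)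
  refine (h_quot.mono_ac (withDensity_absolutelyContinuous _ _)).congr ?_
  refine ae_withDensity_ofReal_of_forall_ne_zero hw.aemeasurable fun z hz => ?_
  exact (gradient_log_eq_inv_smul_gradient_const_mul (hq_diff z.1 z.2) hz).symm

theorem dsm_objective_decomposition_general [SFinite μ] [SFinite ν]
    (hp0_nonneg : ∀ x, 0 ≤ p0 x) (hp0_int : Integrable p0 μ)
    (hq_nonneg : ∀ y x, 0 ≤ q y x) (hq_prob : ∀ x, ∫ y, q y x ∂ν = 1)
    (hq_diff : ∀ x, Differentiable ℝ fun y => q y x)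
    {p : E → ℝ} (hp : p = fun y => ∫ x, p0 x * q y x ∂μ)
    (h_meas : ∀ y, AEStronglyMeasurable (fun x => p0 x * q y x) μ)
    (hswap : ∀ᵐ y ∂ν, p y ≠ 0 → ∇ (fun z => Real.log (p z)) y
      = (p y)⁻¹ • ∫ x, (p0 x * q y x) • ∇ (fun z => Real.log (q z x)) y ∂μ)
    (hsq : Integrable (fun z : α × E =>
      p0 z.1 * q z.2 z.1 * ‖∇ (fun y => Real.log (q y z.1)) z.2‖ ^ 2) (μ.prod ν))
    {ψ : E → E} (hψ_meas : Measurable ψ)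
    (hψ_sq : Integrable (fun z : α × E => p0 z.1 * q z.2 z.1 * ‖ψ z.2‖ ^ 2) (μ.prod ν)) :
    ∫ z, p0 z.1 * q z.2 z.1 * ‖∇ (fun y => Real.log (q y z.1)) z.2 - ψ z.2‖ ^ 2 ∂μ.prod ν
      = ∫ z, p0 z.1 * q z.2 z.1 * ‖∇ (fun y => Real.log (p y)) z.2 - ψ z.2‖ ^ 2 ∂μ.prod ν
        + (∫ z, p0 z.1 * q z.2 z.1 * ‖∇ (fun y => Real.log (q y z.1)) z.2‖ ^ 2 ∂μ.prod ν
          - ∫ z, p0 z.1 * q z.2 z.1 * ‖∇ (fun y => Real.log (p y)) z.2‖ ^ 2 ∂μ.prod ν) := by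
  have hw_nonneg (z : α × E) : 0 ≤ p0 z.1 * q z.2 z.1 :=
    mul_nonneg (hp0_nonneg _) (hq_nonneg _ _)
  have hw : Integrable (fun z : α × E => p0 z.1 * q z.2 z.1) (μ.prod ν) :=
    integrable_joint_density hp0_int hq_nonneg hq_prob <|
      aestronglyMeasurable_uncurry_of_continuous (w := fun x y => p0 x * q y x)
        (fun x => ((hq_diff x).const_mul _).continuous) h_meas
  have h_avg : ∀ᵐ y ∂ν, (∫ x, p0 x * q y x ∂μ) • ∇ (fun z => Real.log (p z)) y
      = ∫ x, (p0 x * q y x) • ∇ (fun z => Real.log (q z x)) y ∂μ := by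
    subst hp
    filter_upwards [hw.prod_left_ae, hswap] with y hw_y hswap_y
    exact integral_smul_eq_integral_smul_of_eq_average (fun x => hw_nonneg (x, y)) hw_y hswap_y
  exact integral_mul_norm_sub_sq_eq_of_marginal_average hw_nonneg hw
    (aestronglyMeasurable_conditional_score hq_diff h_meas) hsq (stronglyMeasurable_gradient _)
    h_avg hψ_meas.stronglyMeasurable hψ_sq

end DenoisingScoreMatching

/-- **Bias–variance style decomposition for denoising score matching.**
With `(Y0, Y)` distributed with joint density `p0(y0) q(y|y0)` (expectations written as
integrals of the joint density against the product Lebesgue measure), for every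
measurable `ψ` with `E‖ψ(Y)‖² < ∞`, and assuming `E‖∇_y log q(Y|Y0)‖² < ∞` and the
validity of differentiation under the integral sign (so that
`∇ log p(y) = E[∇_y log q(Y|Y0) | Y = y]`), one has
`E‖∇_y log q(Y|Y0) − ψ(Y)‖² = E‖∇ log p(Y) − ψ(Y)‖² + C`
where `C = E‖∇_y log q(Y|Y0)‖² − E‖∇ log p(Y)‖²` does not depend on `ψ`. -/
theorem dsm_objective_decomposition {m d : ℕ}
    (p0 : EuclideanSpace ℝ (Fin m) → ℝ)
    (q : EuclideanSpace ℝ (Fin d) → EuclideanSpace ℝ (Fin m) → ℝ)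
    (hp0_nonneg : ∀ y0, 0 ≤ p0 y0)
    (hp0_int : Integrable p0)
    (hp0_prob : ∫ y0, p0 y0 = 1)
    (hq_pos : ∀ y y0, 0 < q y y0)
    (hq_prob : ∀ y0, ∫ y, q y y0 = 1)
    (hq_diff : ∀ y0, Differentiable ℝ (fun y => q y y0))
    (p : EuclideanSpace ℝ (Fin d) → ℝ)
    (hp : p = mixtureDensity p0 q)
    (hfin : ∀ y, Integrable (fun y0 => p0 y0 * q y y0))
    -- validity of differentiation under the integral sign:
    -- `∇ log p(y)` equals the posterior average `E[∇_y log q(Y|Y0) | Y = y]`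
    (hswap : ∀ y, gradient (fun z => Real.log (p z)) y
      = (p y)⁻¹ • ∫ y0, (p0 y0 * q y y0) • gradient (fun z => Real.log (q z y0)) y)
    -- `E‖∇_y log q(Y|Y0)‖² < ∞`
    (hsq : Integrable (fun z : EuclideanSpace ℝ (Fin m) × EuclideanSpace ℝ (Fin d) =>
      p0 z.1 * q z.2 z.1 * ‖gradient (fun y => Real.log (q y z.1)) z.2‖ ^ 2))
    (ψ : EuclideanSpace ℝ (Fin d) → EuclideanSpace ℝ (Fin d))
    (hψ_meas : Measurable ψ)
    -- `E‖ψ(Y)‖² < ∞`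
    (hψ_sq : Integrable (fun z : EuclideanSpace ℝ (Fin m) × EuclideanSpace ℝ (Fin d) =>
      p0 z.1 * q z.2 z.1 * ‖ψ z.2‖ ^ 2)) :
    (∫ z : EuclideanSpace ℝ (Fin m) × EuclideanSpace ℝ (Fin d),
        p0 z.1 * q z.2 z.1 *
          ‖gradient (fun y => Real.log (q y z.1)) z.2 - ψ z.2‖ ^ 2)
      = (∫ z : EuclideanSpace ℝ (Fin m) × EuclideanSpace ℝ (Fin d),
          p0 z.1 * q z.2 z.1 *
            ‖gradient (fun y => Real.log (p y)) z.2 - ψ z.2‖ ^ 2)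
        + ((∫ z : EuclideanSpace ℝ (Fin m) × EuclideanSpace ℝ (Fin d),
            p0 z.1 * q z.2 z.1 *
              ‖gradient (fun y => Real.log (q y z.1)) z.2‖ ^ 2)
          - (∫ z : EuclideanSpace ℝ (Fin m) × EuclideanSpace ℝ (Fin d),
            p0 z.1 * q z.2 z.1 *
              ‖gradient (fun y => Real.log (p y)) z.2‖ ^ 2)) := by
  exact dsm_objective_decomposition_general hp0_nonneg hp0_int (fun y y0 => (hq_pos y y0).le)
    hq_prob hq_diff hp (fun y => (hfin y).1) (ae_of_all _ fun y _ => hswap y) hsq hψ_meas hψ_sq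
end

section
/- Let E, Ẽ, F be standard Borel spaces, X ∼ μ on E, X̃ generated from X by a Markov kernel R : E → Ẽ, and X_t generated from X by a Markov kernel P : E → F, with X_t ⊥ X̃ | X. Let P̄ : Ẽ → F be the posterior-predictive kernel P̄(x̃) = ∫ P(x) dπ(x|x̃) where π(·|x̃) is the regular conditional law of X given X̃ = x̃. Define the conditional mutual information I(X_t; X | X̃) = E_{X̃}[ KL( Law(X_t, X | X̃) ‖ Law(X_t | X̃) ⊗ Law(X | X̃) ) ]. Then E[KL(P(X) ‖ P̄(X̃))] = I(X_t; X | X̃); i.e., the irreducible excess conditional KL risk incurred by conditioning on the corrupted observation X̃ instead of the clean state X equals the conditional mutual information between X_t and X given X̃. -/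
open MeasureTheory ProbabilityTheory
open scoped ENNReal

open Classical in
/-- Kullback–Leibler divergence `KL(ν ‖ ρ) ∈ [0, ∞]`: equal to `∫ log (dν/dρ) dν` when
`ν ≪ ρ` and this integral exists, and `+∞` otherwise. -/
noncomputable def klDiv {α : Type*} [MeasurableSpace α] (ν ρ : Measure α) : ℝ≥0∞ :=
  if ν ≪ ρ ∧ Integrable (llr ν ρ) ν
  then ENNReal.ofReal (∫ x, llr ν ρ x ∂ν)
  else ⊤

/-!
Disintegrate the joint law of `(X, X̃)` along the posterior `π`: the conditioning gap becomes
`E_{X̃} ∫ KL(P x ‖ P̄ X̃) π(dx | X̃)`. For each fixed `x̃`, the inner integral is the mutual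
information of the input `X ∼ π x̃` and the output of the channel `P`, by the chain rule
`KL(m ⊗ κ ‖ m ⊗ η) = ∫ KL(κ a ‖ η a) m(da)` applied to the constant kernel `η = P̄ x̃`. The chain
rule holds in `[0, ∞]` without integrability assumptions because Mathlib's divergence is the
integral of the nonnegative function `klFun (dκ/dη)`.
-/

open InformationTheory (klFun measurable_klFun)
open MeasurableSpace (CountableOrCountablyGenerated)

section Measure

variable {α β : Type*} [MeasurableSpace α] [MeasurableSpace β]

lemma klDiv_eq_informationTheory_klDiv {ν ρ : Measure α} (h : ν Set.univ = ρ Set.univ) :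
    klDiv ν ρ = InformationTheory.klDiv ν ρ := by
  have h_real : ν.real Set.univ = ρ.real Set.univ := congrArg ENNReal.toReal h
  rw [InformationTheory.klDiv_def, klDiv, h_real, add_sub_cancel_right]

lemma klDiv_map_measurableEquiv (e : α ≃ᵐ β) (ν ρ : Measure α)
    [IsFiniteMeasure ν] [IsFiniteMeasure ρ] :
    InformationTheory.klDiv (ν.map e) (ρ.map e) = InformationTheory.klDiv ν ρ := by
  refine le_antisymm (InformationTheory.klDiv_map_le ν ρ e.measurable) ?_
  have h_le := InformationTheory.klDiv_map_le (ν.map e) (ρ.map e) e.symm.measurable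
  rwa [e.map_symm_map, e.map_symm_map] at h_le

lemma lintegral_eq_lintegral_lintegral_of_map_swap_eq {ρ : Measure (α × β)} [SFinite ρ]
    {π : Kernel β α} [IsSFiniteKernel π] (hπ : ρ.map Prod.swap = ρ.snd ⊗ₘ π)
    {f : α × β → ℝ≥0∞} (hf : Measurable f) :
    ∫⁻ z, f z ∂ρ = ∫⁻ b, ∫⁻ a, f (a, b) ∂(π b) ∂ρ.snd := by
  calc ∫⁻ z, f z ∂ρ = ∫⁻ w, f w.swap ∂(ρ.map Prod.swap) :=
        (lintegral_map (hf.comp measurable_swap) measurable_swap).symm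
    _ = ∫⁻ b, ∫⁻ a, f (a, b) ∂(π b) ∂ρ.snd := by
        rw [hπ]
        exact Measure.lintegral_compProd (hf.comp measurable_swap)

end Measure

section Kernel

variable {α β : Type*} [MeasurableSpace α] [MeasurableSpace β] [CountableOrCountablyGenerated α β]

lemma measurable_ofReal_klFun_rnDeriv (κ η : Kernel α β) :
    Measurable fun p : α × β ↦ ENNReal.ofReal (klFun (κ.rnDeriv η p.1 p.2).toReal) :=
  (measurable_klFun.comp (κ.measurable_rnDeriv η).ennreal_toReal).ennreal_ofReal

variable {κ η : Kernel α β} [IsFiniteKernel κ] [IsFiniteKernel η]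

lemma klDiv_apply_eq_lintegral_klFun_rnDeriv {a : α} (h_ac : κ a ≪ η a) :
    InformationTheory.klDiv (κ a) (η a)
      = ∫⁻ b, ENNReal.ofReal (klFun (κ.rnDeriv η a b).toReal) ∂(η a) := by
  rw [InformationTheory.klDiv_eq_lintegral_klFun_of_ac h_ac]
  refine lintegral_congr_ae ?_
  filter_upwards [Kernel.rnDeriv_eq_rnDeriv_measure (κ := κ) (η := η) (a := a)] with b hb
  rw [hb]

variable (κ η) in
lemma measurable_klDiv_apply : Measurable fun a ↦ InformationTheory.klDiv (κ a) (η a) := by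
  classical
  have h_eq (a : α) : InformationTheory.klDiv (κ a) (η a) = if κ a ≪ η a
      then ∫⁻ b, ENNReal.ofReal (klFun (κ.rnDeriv η a b).toReal) ∂(η a) else ∞ := by
    split_ifs with h_ac
    · exact klDiv_apply_eq_lintegral_klFun_rnDeriv h_ac
    · exact InformationTheory.klDiv_of_not_ac h_ac
  simp_rw [h_eq]
  exact Measurable.ite (Kernel.measurableSet_absolutelyContinuous κ η)
    (measurable_ofReal_klFun_rnDeriv κ η).lintegral_kernel_prod_right' measurable_const

lemma compProd_eq_withDensity_rnDeriv {m : Measure α} [SFinite m] (h_ac : ∀ᵐ a ∂m, κ a ≪ η a) :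
    m ⊗ₘ κ = (m ⊗ₘ η).withDensity fun p ↦ κ.rnDeriv η p.1 p.2 := by
  have h_ae : κ =ᵐ[m] η.withDensity (κ.rnDeriv η) := by
    filter_upwards [h_ac] with a ha using (Kernel.withDensity_rnDeriv_eq ha).symm
  rw [Measure.compProd_congr h_ae, Measure.compProd_withDensity (κ.measurable_rnDeriv η)]

lemma rnDeriv_compProd_right {m : Measure α} [IsFiniteMeasure m] (h_ac : ∀ᵐ a ∂m, κ a ≪ η a) :
    (m ⊗ₘ κ).rnDeriv (m ⊗ₘ η) =ᵐ[m ⊗ₘ η] fun p ↦ κ.rnDeriv η p.1 p.2 := by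
  rw [compProd_eq_withDensity_rnDeriv h_ac]
  exact Measure.rnDeriv_withDensity _ (κ.measurable_rnDeriv η)

variable (κ η) in
theorem klDiv_compProd_right (m : Measure α) [IsFiniteMeasure m] :
    InformationTheory.klDiv (m ⊗ₘ κ) (m ⊗ₘ η)
      = ∫⁻ a, InformationTheory.klDiv (κ a) (η a) ∂m := by
  by_cases h_ac : ∀ᵐ a ∂m, κ a ≪ η a
  · calc InformationTheory.klDiv (m ⊗ₘ κ) (m ⊗ₘ η)
      _ = ∫⁻ p, ENNReal.ofReal (klFun ((m ⊗ₘ κ).rnDeriv (m ⊗ₘ η) p).toReal) ∂(m ⊗ₘ η) :=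
          InformationTheory.klDiv_eq_lintegral_klFun_of_ac (.compProd_right h_ac)
      _ = ∫⁻ p, ENNReal.ofReal (klFun (κ.rnDeriv η p.1 p.2).toReal) ∂(m ⊗ₘ η) := by
          refine lintegral_congr_ae ?_
          filter_upwards [rnDeriv_compProd_right h_ac] with p hp
          rw [hp]
      _ = ∫⁻ a, ∫⁻ b, ENNReal.ofReal (klFun (κ.rnDeriv η a b).toReal) ∂(η a) ∂m :=
          Measure.lintegral_compProd (measurable_ofReal_klFun_rnDeriv κ η)
      _ = ∫⁻ a, InformationTheory.klDiv (κ a) (η a) ∂m := by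
          refine lintegral_congr_ae ?_
          filter_upwards [h_ac] with a ha using (klDiv_apply_eq_lintegral_klFun_rnDeriv ha).symm
  · have h_top : ∫⁻ a, InformationTheory.klDiv (κ a) (η a) ∂m = ∞ := by
      contrapose! h_ac with h_ne_top
      filter_upwards [ae_lt_top (measurable_klDiv_apply κ η) h_ne_top] with a ha
      exact (InformationTheory.klDiv_ne_top_iff.mp ha.ne).1
    rw [h_top, InformationTheory.klDiv_of_not_ac
      (Measure.absolutelyContinuous_compProd_right_iff.not.mpr h_ac)]

variable (κ) in
theorem klDiv_map_swap_compProd_prod (m : Measure α) [IsFiniteMeasure m] (ν : Measure β)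
    [IsFiniteMeasure ν] :
    InformationTheory.klDiv ((m ⊗ₘ κ).map Prod.swap) (ν.prod m)
      = ∫⁻ a, InformationTheory.klDiv (κ a) ν ∂m := by
  rw [← Measure.prod_swap, ← Measure.compProd_const]
  exact (klDiv_map_measurableEquiv MeasurableEquiv.prodComm _ _).trans
    (klDiv_compProd_right κ (Kernel.const α ν) m)

end Kernel

theorem conditioning_gap_eq_conditional_mutual_information_general
    {E E' F : Type*} [MeasurableSpace E] [MeasurableSpace E'] [MeasurableSpace F]
    [CountableOrCountablyGenerated E F] [CountableOrCountablyGenerated E' F]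
    (ρ : Measure (E × E')) [SFinite ρ]
    (P : Kernel E F) [IsMarkovKernel P]
    (π : Kernel E' E) [IsMarkovKernel π]
    (hπ : ρ.map Prod.swap = ρ.snd ⊗ₘ π) :
    ∫⁻ z, klDiv (P z.1) ((P ∘ₖ π) z.2) ∂ρ
      = ∫⁻ x', klDiv ((π x' ⊗ₘ P).map Prod.swap) (((P ∘ₖ π) x').prod (π x')) ∂ρ.snd := by
  have h_meas : Measurable fun z : E × E' ↦
      InformationTheory.klDiv (P z.1) ((P ∘ₖ π) z.2) :=
    measurable_klDiv_apply (P.comap Prod.fst measurable_fst)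
      ((P ∘ₖ π).comap Prod.snd measurable_snd)
  have h_prob (x' : E') : IsProbabilityMeasure ((π x' ⊗ₘ P).map Prod.swap) :=
    Measure.isProbabilityMeasure_map measurable_swap.aemeasurable
  calc ∫⁻ z, klDiv (P z.1) ((P ∘ₖ π) z.2) ∂ρ
    _ = ∫⁻ z, InformationTheory.klDiv (P z.1) ((P ∘ₖ π) z.2) ∂ρ :=
        lintegral_congr fun _ ↦ klDiv_eq_informationTheory_klDiv (by simp only [measure_univ])
    _ = ∫⁻ x', ∫⁻ x, InformationTheory.klDiv (P x) ((P ∘ₖ π) x') ∂(π x') ∂ρ.snd :=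
        lintegral_eq_lintegral_lintegral_of_map_swap_eq hπ h_meas
    _ = ∫⁻ x', InformationTheory.klDiv ((π x' ⊗ₘ P).map Prod.swap)
          (((P ∘ₖ π) x').prod (π x')) ∂ρ.snd :=
        lintegral_congr fun _ ↦ (klDiv_map_swap_compProd_prod P _ _).symm
    _ = ∫⁻ x', klDiv ((π x' ⊗ₘ P).map Prod.swap) (((P ∘ₖ π) x').prod (π x')) ∂ρ.snd :=
        lintegral_congr fun _ ↦
          (klDiv_eq_informationTheory_klDiv (by simp only [measure_univ])).symm

/-- **The conditioning gap equals a conditional mutual information (identity (C.8)).**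
`X ∼ μ` on `E`, `X̃` is generated from `X` by the Markov kernel `R : E → Ẽ` (joint law
`μ ⊗ₘ R`), and `X_t` is generated from `X` by the Markov kernel `P : E → F`,
conditionally independently of `X̃` given `X`. Let `π` be a regular conditional
distribution of `X` given `X̃`, and `P̄ = P ∘ₖ π` the posterior-predictive kernel.
By conditional independence, the conditional joint law of `(X_t, X)` given `X̃ = x̃` is
`((π x̃) ⊗ₘ P).map Prod.swap`, its conditional marginals are `P̄ x̃` and `π x̃`, and the
conditional mutual information is
`I(X_t; X | X̃) = E_{X̃}[ KL( Law(X_t, X | X̃) ‖ Law(X_t | X̃) ⊗ Law(X | X̃) ) ]`.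
Then the irreducible excess conditional KL risk incurred by conditioning on the
corrupted observation `X̃` instead of the clean state `X` equals this conditional
mutual information: `E[KL(P(X) ‖ P̄(X̃))] = I(X_t; X | X̃)`. -/
theorem conditioning_gap_eq_conditional_mutual_information
    {E E' F : Type*} [MeasurableSpace E] [StandardBorelSpace E]
    [MeasurableSpace E'] [StandardBorelSpace E']
    [MeasurableSpace F] [StandardBorelSpace F]
    (μ : Measure E) [IsProbabilityMeasure μ]
    (R : Kernel E E') [IsMarkovKernel R]
    (P : Kernel E F) [IsMarkovKernel P]
    (π : Kernel E' E) [IsMarkovKernel π]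
    -- `π` is a regular conditional distribution of `X` given `X̃`
    (hπ : (μ ⊗ₘ R).map Prod.swap = ((μ ⊗ₘ R).snd) ⊗ₘ π) :
    ∫⁻ z, klDiv (P z.1) ((P ∘ₖ π) z.2) ∂(μ ⊗ₘ R)
      = ∫⁻ x', klDiv (((π x') ⊗ₘ P).map Prod.swap)
          (((P ∘ₖ π) x').prod (π x')) ∂((μ ⊗ₘ R).snd) :=
  conditioning_gap_eq_conditional_mutual_information_general (μ ⊗ₘ R) P π hπ
end
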